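/- arXiv:1610.04905 — 5 statements merged into one kernel-verified Lean document; each statement's English description precedes it below -/
import Mathlib

section
/- Fix integers n ≥ 0, N ≥ 0 and t ≥ 0, and let y be a real-valued function on the subsets of {1,…,n}. If y(∅) = 1 and N·y(S) = Σ_{j=1}^{n} y(S ∪ {j}) for every subset S ⊆ {1,…,n} with |S| ≤ 2t − 1 (the sum ranges over all j ∈ {1,…,n}, including j ∈ S, in which case S ∪ {j} = S), then Σ_{S ⊆ {1,…,n}, |S| = i} y(S) = C(N,i) for every integer i with 0 ≤ i ≤ 2t. -/
/-!
Let `σ k` be the sum of `y` over the `k`-element subsets. Summing the hypothesis over all `S` with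
`#S = k`, the terms with `j ∈ S` contribute `k • σ k`, while every `(k + 1)`-set arises as
`insert j S` with `j ∉ S` in exactly `k + 1` ways. Hence `a • σ k = k • σ k + (k + 1) • σ (k + 1)`,
that is `(k + 1) • σ (k + 1) = (a - k) • σ k`, which is the recurrence of the binomial coefficients
`a (a - 1) ⋯ (a - k + 1) / k!`, meaningful in any binomial ring.
-/

section

open Finset Polynomial
open scoped Nat

variable {α M R : Type*} [DecidableEq α]

lemma sum_powersetCard_sum_sdiff_insert [AddCommMonoid M] (y : Finset α → M) (s : Finset α)
    (k : ℕ) :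
    ∑ S ∈ powersetCard k s, ∑ j ∈ s \ S, y (insert j S) =
      (k + 1) • ∑ T ∈ powersetCard (k + 1) s, y T := by
  calc ∑ S ∈ powersetCard k s, ∑ j ∈ s \ S, y (insert j S)
      = ∑ T ∈ powersetCard (k + 1) s, ∑ _j ∈ T, y T := by
        rw [sum_sigma', sum_sigma']
        refine sum_bij' (fun p _ ↦ ⟨insert p.2 p.1, p.2⟩) (fun p _ ↦ ⟨p.1.erase p.2, p.2⟩)
          (by grind) (by grind) ?_ ?_ fun _ _ ↦ rfl
        · rintro ⟨S, j⟩ hSj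
          simp only [erase_insert (mem_sdiff.mp (mem_sigma.mp hSj).2).2]
        · rintro ⟨T, j⟩ hTj
          simp only [insert_erase (mem_sigma.mp hTj).2]
    _ = (k + 1) • ∑ T ∈ powersetCard (k + 1) s, y T := by
        rw [smul_sum]
        refine sum_congr rfl fun T hT ↦ ?_
        rw [sum_const, (mem_powersetCard.mp hT).2]

lemma sum_powersetCard_sum_insert [AddCommMonoid M] (y : Finset α → M) (s : Finset α) (k : ℕ) :
    ∑ S ∈ powersetCard k s, ∑ j ∈ s, y (insert j S) =
      k • ∑ S ∈ powersetCard k s, y S + (k + 1) • ∑ T ∈ powersetCard (k + 1) s, y T := by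
  rw [← sum_powersetCard_sum_sdiff_insert, smul_sum, ← sum_add_distrib]
  refine sum_congr rfl fun S hS ↦ ?_
  obtain ⟨hSs, hcard⟩ := mem_powersetCard.mp hS
  have sum_inside : ∑ j ∈ S, y (insert j S) = k • y S := by
    rw [sum_congr rfl fun j hj ↦ by rw [insert_eq_of_mem hj], sum_const, hcard]
  rw [← sum_sdiff hSs, sum_inside, add_comm]

variable [AddCommGroup M] [Ring R] [Module R M] {y : Finset α → M} {s : Finset α} {a : R}

lemma succ_nsmul_sum_powersetCard_succ {k : ℕ}
    (hrec : ∀ S ∈ powersetCard k s, a • y S = ∑ j ∈ s, y (insert j S)) :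
    (k + 1) • ∑ T ∈ powersetCard (k + 1) s, y T = (a - k) • ∑ S ∈ powersetCard k s, y S := by
  rw [sub_smul, Nat.cast_smul_eq_nsmul, eq_sub_iff_add_eq', ← sum_powersetCard_sum_insert,
    smul_sum, sum_congr rfl hrec]

lemma descPochhammer_succ_smeval (r : R) (k : ℕ) :
    (descPochhammer ℤ (k + 1)).smeval r = (r - k) * (descPochhammer ℤ k).smeval r := by
  rw [descPochhammer_succ_right, mul_comm, smeval_mul, smeval_sub, smeval_X, smeval_natCast,
    pow_one, pow_zero, nsmul_one]

lemma factorial_nsmul_sum_powersetCard {m : ℕ}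
    (hrec : ∀ S ⊆ s, #S < m → a • y S = ∑ j ∈ s, y (insert j S)) {k : ℕ} (hk : k ≤ m) :
    k ! • ∑ S ∈ powersetCard k s, y S = (descPochhammer ℤ k).smeval a • y ∅ := by
  induction k with
  | zero => simp
  | succ k ih =>
    have hrec_k : ∀ S ∈ powersetCard k s, a • y S = ∑ j ∈ s, y (insert j S) := fun S hS ↦ by
      obtain ⟨hSs, rfl⟩ := mem_powersetCard.mp hS
      exact hrec S hSs hk
    rw [Nat.factorial_succ, mul_comm, mul_nsmul', succ_nsmul_sum_powersetCard_succ hrec_k,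
      smul_comm, ih (Nat.le_of_succ_le hk), smul_smul, descPochhammer_succ_smeval]

theorem stmt_0_general [BinomialRing R] [IsAddTorsionFree M] {m : ℕ}
    (hrec : ∀ S ⊆ s, #S < m → a • y S = ∑ j ∈ s, y (insert j S)) {k : ℕ} (hk : k ≤ m) :
    ∑ S ∈ powersetCard k s, y S = Ring.choose a k • y ∅ := by
  rw [← nsmul_right_inj k.factorial_ne_zero, factorial_nsmul_sum_powersetCard hrec hk,
    Ring.descPochhammer_eq_factorial_smul_choose, smul_assoc]

end

/-- If `y ∅ = 1` and `N · y S = ∑_{j=1}^n y (S ∪ {j})` for every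
`S ⊆ {1,…,n}` with `|S| ≤ 2t - 1`, then `∑_{|S| = i} y S = C(N,i)` for `0 ≤ i ≤ 2t`. -/
theorem stmt_0 (n N t : ℕ) (y : Finset (Fin n) → ℝ)
    (h0 : y ∅ = 1)
    (hrec : ∀ S : Finset (Fin n), S.card + 1 ≤ 2 * t →
      (N : ℝ) * y S = ∑ j : Fin n, y (insert j S)) :
    ∀ i : ℕ, i ≤ 2 * t →
      ∑ S ∈ Finset.univ.filter (fun S : Finset (Fin n) => S.card = i), y S
        = (N.choose i : ℝ) := by
  intro i hi
  simpa [h0, Ring.choose_natCast] using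
    stmt_0_general (a := (N : ℝ)) (y := y) (s := Finset.univ) (fun S _ ↦ hrec S) hi
end

section
/- Let V be a finite set, N an integer with 1 ≤ N ≤ |V|, and f : Finset V → ℝ. Define the ground state energy E = min over all S ⊆ V with |S| = N of Σ_{T ⊆ S, |T| = 2} f(T). Call λ : Finset V → ℝ feasible if: λ(S) = 0 whenever |S| > 2N; λ(S) ≥ 0 for all S ⊆ V; Σ_{S ⊆ V, |S| = i} λ(S) = C(N,i) for every integer 0 ≤ i ≤ 2N; and the N-th moment matrix of λ is positive semidefinite. Then the set of feasible λ is nonempty, the infimum of Σ_{S ⊆ V, |S| = 2} f(S)·λ(S) over all feasible λ is attained, and this minimum equals E. -/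
/-!
The moment sequence `T ↦ [T ⊆ S]` of the point mass at an `N`-set `S` is feasible, and feasibility
is a convex condition. Conversely, let `lam` be feasible. Since `C(N, i) = 0` for `i > N` and
`lam ≥ 0`, it vanishes above cardinality `N`, so that the `N`-sets are orthogonal for the form given
by the moment matrix. The vector `x = e_∅ - ∑_{|W| = N} e_W` then satisfies `xᵀ M x = 0`, and
`M x = 0` because `M` is positive semidefinite. Read off at the row `S`, this says
`lam S = ∑_{|W| = N, S ⊆ W} lam W`: `lam` is a convex combination of moment sequences of point
masses. A linear objective has the same minimum over a set as over its convex hull.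
-/

open Finset

/-- The `t`-th moment matrix of `lam : Finset V → ℝ`, indexed by the subsets of
cardinality at most `t`, with `(J,J')` entry `lam (J ∪ J')`. -/
def momentMatrix {V : Type*} [DecidableEq V] (t : ℕ) (lam : Finset V → ℝ) :
    Matrix {J : Finset V // J.card ≤ t} {J : Finset V // J.card ≤ t} ℝ :=
  fun J J' => lam (J.1 ∪ J'.1)

open scoped Matrix

lemma isLeast_convexHull {𝕜 β : Type*} [Semiring 𝕜] [PartialOrder 𝕜] [AddCommMonoid β]
    [PartialOrder β] [IsOrderedAddMonoid β] [Module 𝕜 β] [PosSMulMono 𝕜 β] {s : Set β} {a : β}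
    (h : IsLeast s a) : IsLeast (convexHull 𝕜 s) a :=
  ⟨subset_convexHull 𝕜 s h.1, convexHull_min h.2 (convex_Ici a)⟩

section

variable {V : Type*} [DecidableEq V]

/-- The moment sequence of the point mass at `S`, where the moment at `T` is the probability that
a random set contains `T`. -/
def diracMoments (S : Finset V) : Finset V → ℝ := fun T => if T ⊆ S then 1 else 0

lemma momentMatrix_diracMoments (t : ℕ) (S : Finset V) :
    momentMatrix t (diracMoments S) =
      Matrix.vecMulVec (fun J => diracMoments S J.1) (star fun J => diracMoments S J.1) := by
  ext J J'
  simp [momentMatrix, diracMoments, Matrix.vecMulVec_apply, union_subset_iff, ← ite_and, and_comm]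

variable [Fintype V]

lemma sum_mul_diracMoments (p : Finset V → Prop) [DecidablePred p] (f : Finset V → ℝ)
    (S : Finset V) :
    ∑ T with p T, f T * diracMoments S T = ∑ T ∈ S.powerset with p T, f T := by
  simp only [diracMoments, mul_ite, mul_one, mul_zero]
  rw [← sum_filter, filter_comm, filter_subset_univ]

lemma sum_diracMoments_card_eq (S : Finset V) (i : ℕ) :
    ∑ T with #T = i, diracMoments S T = (#S).choose i := by
  have h := sum_mul_diracMoments (fun T => #T = i) 1 S
  simpa only [Pi.one_apply, one_mul, sum_const, nsmul_one, ← powersetCard_eq_filter,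
    card_powersetCard] using h

/-- The feasible set of the moment relaxation for `N` particles. -/
def feasibleMoments (V : Type*) [Fintype V] [DecidableEq V] (N : ℕ) : Set (Finset V → ℝ) :=
  {lam | (∀ S : Finset V, 2 * N < #S → lam S = 0) ∧
    (∀ S : Finset V, 0 ≤ lam S) ∧
    (∀ i : ℕ, i ≤ 2 * N → ∑ S with #S = i, lam S = (N.choose i : ℝ)) ∧
    (momentMatrix N lam).PosSemidef}

lemma diracMoments_mem_feasibleMoments (S : Finset V) :
    diracMoments S ∈ feasibleMoments V #S := by
  refine ⟨fun T hT => if_neg fun hTS => ?_, fun T => ?_,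
    fun i _ => sum_diracMoments_card_eq S i, ?_⟩
  · have := card_le_card hTS
    omega
  · unfold diracMoments
    positivity
  · rw [momentMatrix_diracMoments]
    exact Matrix.posSemidef_vecMulVec_self_star _

lemma convex_feasibleMoments (N : ℕ) : Convex ℝ (feasibleMoments V N) := by
  rintro x ⟨hx_zero, hx_nonneg, hx_sum, hx_psd⟩ y ⟨hy_zero, hy_nonneg, hy_sum, hy_psd⟩ a b ha hb hab
  refine ⟨fun S hS => ?_, fun S => ?_, fun i hi => ?_, (hx_psd.smul ha).add (hy_psd.smul hb)⟩
  · simp [hx_zero S hS, hy_zero S hS]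
  · exact add_nonneg (mul_nonneg ha (hx_nonneg S)) (mul_nonneg hb (hy_nonneg S))
  · simp only [Pi.add_apply, Pi.smul_apply, smul_eq_mul, sum_add_distrib, ← mul_sum,
      hx_sum i hi, hy_sum i hi]
    rw [← add_mul, hab, one_mul]

/-- The vector `e_∅ - ∑_{|W| = N} e_W` indexed by the sets of cardinality at most `N`, which turns
out to lie in the kernel of the moment matrix of a feasible sequence. -/
def kernelVector (V : Type*) [DecidableEq V] (N : ℕ) : {J : Finset V // #J ≤ N} → ℝ :=
  fun J => (if J.1 = ∅ then 1 else 0) - (if #J.1 = N then 1 else 0)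

lemma kernelVector_dotProduct (N : ℕ) (g : Finset V → ℝ) :
    kernelVector V N ⬝ᵥ (fun J => g J.1) = g ∅ - ∑ W ∈ powersetCard N univ, g W := by
  have htop : ({J | #J ≤ N ∧ #J = N} : Finset (Finset V)) = powersetCard N univ := by
    ext J
    simpa using Eq.le
  simp only [dotProduct, kernelVector, sub_mul, ite_mul, one_mul, zero_mul]
  rw [← sum_subtype ({J | #J ≤ N} : Finset (Finset V)) (fun J => mem_filter_univ J)
    fun J => (if J = ∅ then g J else 0) - (if #J = N then g J else 0), sum_sub_distrib,
    sum_ite_eq_of_mem' _ _ _ (by simp), ← sum_filter, filter_filter, htop]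

lemma momentMatrix_mulVec_kernelVector (N : ℕ) (lam : Finset V → ℝ) :
    momentMatrix N lam *ᵥ kernelVector V N =
      fun J => lam J.1 - ∑ W ∈ powersetCard N univ, lam (J.1 ∪ W) := by
  ext J
  rw [Matrix.mulVec, dotProduct_comm]
  exact (kernelVector_dotProduct N fun T => lam (J.1 ∪ T)).trans (by rw [union_empty])

lemma sum_union_powersetCard {M : Type*} [AddCommMonoid M] {N : ℕ} {lam : Finset V → M}
    (hlam : ∀ S, N < #S → lam S = 0) (S : Finset V) :
    ∑ W ∈ powersetCard N univ, lam (S ∪ W) = ∑ W ∈ powersetCard N univ with S ⊆ W, lam W := by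
  rw [sum_filter]
  refine sum_congr rfl fun W hW => ?_
  split_ifs with hSW
  · rw [union_eq_right.2 hSW]
  · refine hlam _ ?_
    rw [← mem_powersetCard_univ.1 hW]
    exact card_lt_card (right_lt_sup.2 hSW)

lemma sum_union_powersetCard_of_card_eq {M : Type*} [AddCommMonoid M] {N : ℕ} {lam : Finset V → M}
    (hlam : ∀ S, N < #S → lam S = 0) {S : Finset V} (hS : #S = N) :
    ∑ W ∈ powersetCard N univ, lam (S ∪ W) = lam S := by
  have hsuperset : {W ∈ powersetCard N (univ : Finset V) | S ⊆ W} = {S} := by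
    ext W
    simp only [mem_filter, mem_powersetCard_univ, mem_singleton]
    refine ⟨fun ⟨hW, hSW⟩ => (eq_of_subset_of_card_le hSW (hW.trans hS.symm).le).symm, ?_⟩
    rintro rfl
    exact ⟨hS, Subset.rfl⟩
  rw [sum_union_powersetCard hlam, hsuperset, sum_singleton]

lemma momentMatrix_mulVec_kernelVector_eq_zero {N : ℕ} {lam : Finset V → ℝ}
    (hpsd : (momentMatrix N lam).PosSemidef) (hlam : ∀ S, N < #S → lam S = 0)
    (hempty : lam ∅ = ∑ W ∈ powersetCard N univ, lam W) :
    momentMatrix N lam *ᵥ kernelVector V N = 0 := by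
  rw [← hpsd.dotProduct_mulVec_zero_iff, star_trivial, momentMatrix_mulVec_kernelVector,
    kernelVector_dotProduct N fun S => lam S - ∑ W ∈ powersetCard N univ, lam (S ∪ W)]
  have htop : ∑ S ∈ powersetCard N univ,
      (lam S - ∑ W ∈ powersetCard N univ, lam (S ∪ W)) = 0 :=
    sum_eq_zero fun S hS => sub_eq_zero.2
      (sum_union_powersetCard_of_card_eq hlam (mem_powersetCard_univ.1 hS)).symm
  simp [htop, hempty]

lemma eq_sum_superset_of_posSemidef {N : ℕ} {lam : Finset V → ℝ}
    (hpsd : (momentMatrix N lam).PosSemidef) (hlam : ∀ S, N < #S → lam S = 0)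
    (hempty : lam ∅ = ∑ W ∈ powersetCard N univ, lam W) (S : Finset V) :
    lam S = ∑ W ∈ powersetCard N univ with S ⊆ W, lam W := by
  rw [← sum_union_powersetCard hlam]
  obtain hS | hS := le_or_gt #S N
  · have hrow := congrFun (momentMatrix_mulVec_kernelVector_eq_zero hpsd hlam hempty) ⟨S, hS⟩
    rw [momentMatrix_mulVec_kernelVector] at hrow
    exact sub_eq_zero.1 hrow
  · rw [hlam S hS, sum_eq_zero fun W _ => hlam _ (hS.trans_le (card_le_card subset_union_left))]

lemma eq_zero_of_mem_feasibleMoments {N : ℕ} {lam : Finset V → ℝ}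
    (hlam : lam ∈ feasibleMoments V N) {S : Finset V} (hS : N < #S) : lam S = 0 := by
  obtain ⟨hzero, hnonneg, hsum, -⟩ := hlam
  obtain hS' | hS' := le_or_gt #S (2 * N)
  · have hlevel := hsum #S hS'
    rw [Nat.choose_eq_zero_of_lt hS, Nat.cast_zero,
      sum_eq_zero_iff_of_nonneg fun T _ => hnonneg T] at hlevel
    exact hlevel S ((mem_filter_univ S).2 rfl)
  · exact hzero S hS'

lemma mem_convexHull_of_mem_feasibleMoments {N : ℕ} {lam : Finset V → ℝ}
    (hlam : lam ∈ feasibleMoments V N) :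
    lam ∈ convexHull ℝ (diracMoments '' {S : Finset V | #S = N}) := by
  obtain ⟨-, hnonneg, hsum, hpsd⟩ := id hlam
  have hempty : lam ∅ = 1 := by simpa [filter_eq'] using hsum 0 (Nat.zero_le _)
  have htop : ∑ W ∈ powersetCard N univ, lam W = 1 := by simpa using hsum N (by omega)
  have hrep : lam = ∑ W ∈ powersetCard N univ, lam W • diracMoments W := by
    ext S
    rw [eq_sum_superset_of_posSemidef hpsd (fun _ => eq_zero_of_mem_feasibleMoments hlam)
      (hempty.trans htop.symm) S]
    simp [diracMoments, sum_filter]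
  rw [hrep]
  exact (convex_convexHull ℝ _).sum_mem (fun W _ => hnonneg W) htop fun W hW =>
    subset_convexHull ℝ _ ⟨W, mem_powersetCard_univ.1 hW, rfl⟩

theorem feasibleMoments_eq_convexHull (N : ℕ) :
    feasibleMoments V N = convexHull ℝ (diracMoments '' {S : Finset V | #S = N}) := by
  refine Set.Subset.antisymm (fun _ => mem_convexHull_of_mem_feasibleMoments)
    (convexHull_min ?_ (convex_feasibleMoments N))
  rintro _ ⟨S, rfl, rfl⟩
  exact diracMoments_mem_feasibleMoments S

end

theorem stmt_1_general {V : Type*} [Fintype V] [DecidableEq V] (N : ℕ) (p : Finset V → Prop)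
    [DecidablePred p] (f : Finset V → ℝ) (E : ℝ)
    (hE : IsLeast {e : ℝ | ∃ S : Finset V, #S = N ∧ e = ∑ T ∈ S.powerset with p T, f T} E) :
    IsLeast {e : ℝ | ∃ lam ∈ feasibleMoments V N, e = ∑ S with p S, f S * lam S} E := by
  let energy : (Finset V → ℝ) →ₗ[ℝ] ℝ := ∑ S with p S, f S • LinearMap.proj S
  have energy_apply (lam : Finset V → ℝ) : energy lam = ∑ S with p S, f S * lam S := by
    simp [energy]
  have henergies : {e : ℝ | ∃ S : Finset V, #S = N ∧ e = ∑ T ∈ S.powerset with p T, f T} =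
      energy '' (diracMoments '' {S : Finset V | #S = N}) := by
    ext e
    simp [energy_apply, sum_mul_diracMoments, eq_comm]
  have hobjective : {e : ℝ | ∃ lam ∈ feasibleMoments V N, e = ∑ S with p S, f S * lam S} =
      energy '' feasibleMoments V N := by
    ext e
    simp [energy_apply, eq_comm]
  rw [hobjective, feasibleMoments_eq_convexHull, energy.image_convexHull, ← henergies]
  exact isLeast_convexHull hE

/-- For a finite set `V`, `1 ≤ N ≤ |V|` and `f : Finset V → ℝ`, with
`E` the minimum of `∑_{T ⊆ S, |T| = 2} f T` over `S ⊆ V` with `|S| = N`, the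
set of feasible `lam` is nonempty, the infimum of the objective over feasible `lam`
is attained, and this minimum equals `E`. -/
theorem stmt_1 {V : Type*} [Fintype V] [DecidableEq V] (N : ℕ)
    (hN1 : 1 ≤ N) (hN2 : N ≤ Fintype.card V) (f : Finset V → ℝ) (E : ℝ)
    (hE : IsLeast {e : ℝ | ∃ S : Finset V, S.card = N ∧
      e = ∑ T ∈ S.powerset.filter (fun T => T.card = 2), f T} E) :
    IsLeast {e : ℝ | ∃ lam : Finset V → ℝ,
      (∀ S : Finset V, 2 * N < S.card → lam S = 0) ∧
      (∀ S : Finset V, 0 ≤ lam S) ∧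
      (∀ i : ℕ, i ≤ 2 * N →
        ∑ S ∈ Finset.univ.filter (fun S : Finset V => S.card = i), lam S
          = (N.choose i : ℝ)) ∧
      (momentMatrix N lam).PosSemidef ∧
      e = ∑ S ∈ Finset.univ.filter (fun S : Finset V => S.card = 2), f S * lam S} E := by
  simpa only [feasibleMoments, Set.mem_ofPred_eq, and_assoc] using
    stmt_1_general N (fun T => T.card = 2) f E hE
end

section
/- Let V be a finite set and t ≥ 1 an integer. Let λ : Finset V → ℝ satisfy λ(S) = 0 whenever |S| > t, and suppose the t-th moment matrix of λ is positive semidefinite. Define σ : Finset V → ℝ by σ(R) = Σ_{S ⊆ V, R ⊆ S} (−1)^{|S ∖ R|} λ(S). Then λ(S) = Σ_{R ⊆ V, S ⊆ R} σ(R) for every S ⊆ V, σ(R) = 0 whenever |R| > t, and σ(R) ≥ 0 for every R ⊆ V. -/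
/-!
Let `ζ` and `μ` be the zeta and Möbius matrices of a finite join-semilattice, and let `σ = μ f`.
Then `f = ζ σ`, and since `a ⊔ b ≤ c` says `a ≤ c` and `b ≤ c`, the matrix with entries `f (a ⊔ b)`
factors as `ζ * diag σ * ζᴴ` (Lindström, Wilf). As `ζ` is invertible, positive semidefiniteness of
this matrix forces `σ ≥ 0`. If `f` vanishes off a lower set `s`, every entry outside the `s × s`
block is zero, so it is enough that this block is positive semidefinite. The theorem is the case of
the Boolean lattice, whose Möbius function is `(-1) ^ |S \ R|`.
-/

open Finset

open IncidenceAlgebra Matrix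

section MoebiusFinset

variable {𝕜 V : Type*} [Ring 𝕜] [DecidableEq V]

lemma sum_Icc_neg_one_pow_card_sdiff (R T : Finset V) :
    ∑ S ∈ Icc R T, (-1 : 𝕜) ^ (S \ R).card = if R = T then 1 else 0 := by
  by_cases hRT : R ⊆ T
  · have hdisj : ∀ K ∈ (T \ R).powerset, Disjoint K R := fun K hK ↦
      disjoint_of_subset_left (mem_powerset.1 hK) sdiff_disjoint
    have hinj : Set.InjOn (R ∪ ·) ((T \ R).powerset : Set (Finset V)) := fun K hK L hL h ↦ by
      rw [← union_sdiff_cancel_left (hdisj K hK).symm, ← union_sdiff_cancel_left (hdisj L hL).symm]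
      exact congrArg (· \ R) h
    have hempty : T \ R = ∅ ↔ R = T :=
      sdiff_eq_empty_iff_subset.trans ⟨hRT.antisymm, fun h ↦ h.superset⟩
    calc ∑ S ∈ Icc R T, (-1 : 𝕜) ^ (S \ R).card
        = ∑ K ∈ (T \ R).powerset, (-1 : 𝕜) ^ K.card := by
          rw [Icc_eq_image_powerset hRT, sum_image hinj]
          exact sum_congr rfl fun K hK ↦ by rw [union_sdiff_cancel_left (hdisj K hK).symm]
      _ = if T \ R = ∅ then 1 else 0 := by
          exact_mod_cast congrArg (Int.cast : ℤ → 𝕜) (sum_powerset_neg_one_pow_card (x := T \ R))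
      _ = if R = T then 1 else 0 := by simp only [hempty]
  · rw [Icc_eq_empty hRT, sum_empty, if_neg fun h ↦ hRT h.subset]

lemma mu_finset_apply (R S : Finset V) :
    mu 𝕜 R S = if R ⊆ S then (-1) ^ (S \ R).card else 0 := by
  let signed : IncidenceAlgebra 𝕜 (Finset V) :=
    ⟨fun R S ↦ if R ⊆ S then (-1) ^ (S \ R).card else 0, fun _ _ h ↦ if_neg h⟩
  have signed_mul_zeta : signed * zeta 𝕜 = 1 := by
    ext R T
    rw [IncidenceAlgebra.mul_apply, IncidenceAlgebra.one_apply, ← sum_Icc_neg_one_pow_card_sdiff]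
    refine sum_congr rfl fun S hS ↦ ?_
    rw [zeta_of_le (mem_Icc.1 hS).2, mul_one]
    exact if_pos (mem_Icc.1 hS).1
  have mu_eq_signed : mu 𝕜 = signed := (left_inv_eq_right_inv signed_mul_zeta zeta_mul_mu).symm
  rw [mu_eq_signed]
  rfl

end MoebiusFinset

section IncidenceMatrix

variable {𝕜 α : Type*} [PartialOrder α] [Fintype α] [LocallyFiniteOrder α] [DecidableEq α]

/-- The representation of the incidence algebra of a finite poset by matrices, whose action on
functions `α → 𝕜` turns Möbius inversion into matrix inversion. -/
def incidenceMatrix [Semiring 𝕜] : IncidenceAlgebra 𝕜 α →+* Matrix α α 𝕜 where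
  toFun f := of f
  map_zero' := rfl
  map_add' _ _ := rfl
  map_one' := by
    ext a b
    rw [of_apply, IncidenceAlgebra.one_apply, Matrix.one_apply]
  map_mul' f g := by
    ext a b
    rw [of_apply, IncidenceAlgebra.mul_apply, Matrix.mul_apply]
    refine sum_subset (subset_univ _) fun c _ hc ↦ ?_
    rw [mem_Icc, not_and_or] at hc
    obtain hac | hcb := hc
    · rw [apply_eq_zero_of_not_le hac, zero_mul]
    · rw [apply_eq_zero_of_not_le hcb, mul_zero]

lemma incidenceMatrix_apply [Semiring 𝕜] (f : IncidenceAlgebra 𝕜 α) (a b : α) :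
    incidenceMatrix f a b = f a b := rfl

lemma incidenceMatrix_zeta_mulVec_apply [Semiring 𝕜] [DecidableLE α] (f : α → 𝕜) (a : α) :
    (incidenceMatrix (zeta 𝕜) *ᵥ f) a = ∑ b with a ≤ b, f b := by
  simp only [mulVec, dotProduct, incidenceMatrix_apply, zeta_apply, boole_mul, sum_filter]

lemma isUnit_incidenceMatrix_zeta [Ring 𝕜] [DecidableLE α] :
    IsUnit (incidenceMatrix (zeta 𝕜 : IncidenceAlgebra 𝕜 α)) :=
  (Units.mk (zeta 𝕜) (mu 𝕜) zeta_mul_mu (mu_mul_zeta 𝕜 α)).isUnit.map incidenceMatrix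

lemma incidenceMatrix_zeta_mulVec_mu_mulVec [Ring 𝕜] [DecidableLE α] (f : α → 𝕜) :
    incidenceMatrix (zeta 𝕜) *ᵥ incidenceMatrix (mu 𝕜) *ᵥ f = f := by
  rw [mulVec_mulVec, ← map_mul, zeta_mul_mu, map_one, one_mulVec]

end IncidenceMatrix

section JoinMatrix

/-- The join matrix of `f` on a join-semilattice, with `(a, b)` entry `f (a ⊔ b)`. On the lattice of
subsets of a finite set it is the moment matrix of `f` without a bound on cardinalities. -/
def joinMatrix {𝕜 α : Type*} [Max α] (f : α → 𝕜) : Matrix α α 𝕜 :=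
  of fun a b ↦ f (a ⊔ b)

variable {𝕜 α : Type*} [SemilatticeSup α] [Fintype α] [LocallyFiniteOrder α] [DecidableEq α]
  [DecidableLE α]

lemma joinMatrix_zeta_mulVec [Semiring 𝕜] [StarRing 𝕜] (σ : α → 𝕜) :
    joinMatrix (incidenceMatrix (zeta 𝕜) *ᵥ σ) =
      incidenceMatrix (zeta 𝕜) * diagonal σ * star (incidenceMatrix (zeta 𝕜)) := by
  ext a b
  calc joinMatrix (incidenceMatrix (zeta 𝕜) *ᵥ σ) a b
      = ∑ c with a ⊔ b ≤ c, σ c := incidenceMatrix_zeta_mulVec_apply σ (a ⊔ b)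
    _ = ∑ c, zeta 𝕜 a c * σ c * star (zeta 𝕜 b c) := by
      rw [sum_filter]
      refine sum_congr rfl fun c _ ↦ ?_
      by_cases hac : a ≤ c <;> by_cases hbc : b ≤ c <;> simp [sup_le_iff, hac, hbc]
    _ = (incidenceMatrix (zeta 𝕜) * diagonal σ * star (incidenceMatrix (zeta 𝕜)) :
          Matrix α α 𝕜) a b := by
      rw [Matrix.mul_apply]
      simp only [mul_diagonal, star_apply, incidenceMatrix_apply]

lemma nonneg_of_posSemidef_joinMatrix_zeta_mulVec [Ring 𝕜] [PartialOrder 𝕜] [StarRing 𝕜]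
    {σ : α → 𝕜} (h : (joinMatrix (incidenceMatrix (zeta 𝕜) *ᵥ σ)).PosSemidef) :
    0 ≤ σ := by
  rw [joinMatrix_zeta_mulVec, isUnit_incidenceMatrix_zeta.posSemidef_star_right_conjugate_iff] at h
  exact fun a ↦ (h.diag_nonneg (i := a)).trans_eq (diagonal_apply_eq σ a)

end JoinMatrix

lemma posSemidef_of_posSemidef_submatrix {n R : Type*} [Ring R] [PartialOrder R] [StarRing R]
    {M : Matrix n n R} {s : Set n} (hs : (M.submatrix ((↑) : s → n) (↑)).PosSemidef)
    (hM : ∀ i j, M i j ≠ 0 → i ∈ s ∧ j ∈ s) : M.PosSemidef := by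
  classical
  refine ⟨.ext fun i j ↦ ?_, fun x ↦ ?_⟩
  · by_cases hij : i ∈ s ∧ j ∈ s
    · exact hs.isHermitian.apply ⟨i, hij.1⟩ ⟨j, hij.2⟩
    · rw [not_imp_comm.1 (hM i j) hij, not_imp_comm.1 (hM j i) (mt And.symm hij), star_zero]
  · have entry_ne_zero {i j : n} (h : star (x i) * M i j * x j ≠ 0) : i ∈ s ∧ j ∈ s :=
      hM i j (right_ne_zero_of_mul (left_ne_zero_of_mul h))
    calc 0 ≤ ∑ i ∈ x.support.subtype (· ∈ s), ∑ j ∈ x.support.subtype (· ∈ s),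
            star (x i) * M i j * x j := hs.2 (x.subtypeDomain (· ∈ s))
      _ = ∑ i ∈ x.support with i ∈ s, ∑ j ∈ x.support with j ∈ s, star (x i) * M i j * x j := by
        simp_rw [← sum_subtype_eq_sum_filter]
      _ = ∑ i ∈ x.support, ∑ j ∈ x.support, star (x i) * M i j * x j := by
        rw [sum_filter_of_ne fun i _ hi ↦ ?_]
        · exact sum_congr rfl fun i _ ↦ sum_filter_of_ne fun j _ hij ↦ (entry_ne_zero hij).2
        · obtain ⟨j, -, hij⟩ := exists_ne_zero_of_sum_ne_zero hi
          exact (entry_ne_zero hij).1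

theorem stmt_2_general {𝕜 α : Type*} [Ring 𝕜] [PartialOrder 𝕜] [StarRing 𝕜] [SemilatticeSup α]
    [Fintype α] [LocallyFiniteOrder α] [DecidableEq α] [DecidableLE α] {s : Set α}
    (hs : IsLowerSet s) (f : α → 𝕜) (hf : ∀ a ∉ s, f a = 0)
    (hpsd : ((joinMatrix f).submatrix ((↑) : s → α) (↑)).PosSemidef)
    (σ : α → 𝕜) (hσ : ∀ a, σ a = ∑ b, mu 𝕜 a b * f b) :
    (∀ a, f a = ∑ b with a ≤ b, σ b) ∧ (∀ a ∉ s, σ a = 0) ∧ ∀ a, 0 ≤ σ a := by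
  have inversion : incidenceMatrix (zeta 𝕜) *ᵥ σ = f := by
    rw [show σ = incidenceMatrix (mu 𝕜) *ᵥ f from funext hσ, incidenceMatrix_zeta_mulVec_mu_mulVec]
  refine ⟨fun a ↦ ?_, fun a ha ↦ ?_, ?_⟩
  · rw [← incidenceMatrix_zeta_mulVec_apply, inversion]
  · refine (hσ a).trans (sum_eq_zero fun b _ ↦ ?_)
    by_cases hab : a ≤ b
    · rw [hf b fun hb ↦ ha (hs hab hb), mul_zero]
    · rw [apply_eq_zero_of_not_le hab, zero_mul]
  · have hfull : (joinMatrix f).PosSemidef :=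
      posSemidef_of_posSemidef_submatrix hpsd fun a b hab ↦
        have hmem : a ⊔ b ∈ s := not_imp_comm.1 (hf _) hab
        ⟨hs le_sup_left hmem, hs le_sup_right hmem⟩
    exact nonneg_of_posSemidef_joinMatrix_zeta_mulVec (inversion.symm ▸ hfull)

/-- If `lam` vanishes on sets of cardinality `> t` and its `t`-th
moment matrix is positive semidefinite, then with
`σ R = ∑_{S ⊇ R} (-1)^{|S \ R|} lam S` one has the Möbius inversion
`lam S = ∑_{R ⊇ S} σ R`, `σ R = 0` for `|R| > t`, and `σ R ≥ 0` for all `R`. -/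
theorem stmt_2 {V : Type*} [Fintype V] [DecidableEq V] (t : ℕ) (ht : 1 ≤ t)
    (lam : Finset V → ℝ)
    (hsupp : ∀ S : Finset V, t < S.card → lam S = 0)
    (hpsd : (momentMatrix t lam).PosSemidef)
    (σ : Finset V → ℝ)
    (hσ : ∀ R : Finset V,
      σ R = ∑ S ∈ Finset.univ.filter (fun S : Finset V => R ⊆ S),
        (-1 : ℝ) ^ (S \ R).card * lam S) :
    (∀ S : Finset V,
      lam S = ∑ R ∈ Finset.univ.filter (fun R : Finset V => S ⊆ R), σ R) ∧
    (∀ R : Finset V, t < R.card → σ R = 0) ∧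
    (∀ R : Finset V, 0 ≤ σ R) := by
  have hlower : IsLowerSet {J : Finset V | J.card ≤ t} := fun _ _ h hJ ↦ (card_le_card h).trans hJ
  simpa only [Set.mem_ofPred_eq, not_le] using
    stmt_2_general hlower lam (fun S hS ↦ hsupp S (not_le.1 hS)) hpsd σ fun R ↦ by
      simp only [hσ R, mu_finset_apply, ite_mul, zero_mul, sum_filter]
end

section
/- Let V be a finite set and N an integer with 1 ≤ N ≤ |V|. Let F be the convex set of all λ : Finset V → ℝ such that: λ(S) = 0 whenever |S| > 2N; λ(S) ≥ 0 for all S ⊆ V; Σ_{S ⊆ V, |S| = i} λ(S) = C(N,i) for every integer 0 ≤ i ≤ 2N; and the N-th moment matrix of λ is positive semidefinite. Then λ ∈ F is an extreme point of F (i.e., whenever λ = ½(λ₁ + λ₂) with λ₁, λ₂ ∈ F one has λ₁ = λ₂) if and only if there exists S₀ ⊆ V with |S₀| = N such that λ(R) = 1 for every R ⊆ S₀ and λ(R) = 0 for every R ⊆ V with R ⊄ S₀. -/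
/-!
Möbius inversion writes a function on a finite poset as a combination `∑ T, w T • 𝟙_{≤ T}`. In a
join-semilattice, `𝟙_{≤ T} (J ⊔ J') = 𝟙_{≤ T} J * 𝟙_{≤ T} J'`, so the matrix `lam (J ⊔ J')` is
congruent through the zeta matrix to the diagonal matrix of the weights `w`. The moment matrix of a
feasible `lam` therefore forces `w ≥ 0`: the constraints of index `N < i ≤ 2N` make `lam` vanish
above level `N`, so the truncation to `|J|, |J'| ≤ N` only omits zero rows and columns.

The vanishing above level `N` also shows that `w` agrees with `lam` on level `N` and vanishes above
it. Index `0` makes the total weight `1`, and index `N` makes the weight of level `N` equal to `1`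
as well, which leaves nothing below. Hence the feasible set is the convex hull of the functions
`𝟙_{≤ S}` with `|S| = N`, and these are extreme because they are vertices of the cube
`[0, 1]^(Finset V)`.
-/

open Finset

/-- The feasible region `F` of the `N`-th relaxation. -/
def FeasibleSet {V : Type*} [Fintype V] [DecidableEq V] (N : ℕ) :
    Set (Finset V → ℝ) :=
  {lam | (∀ S : Finset V, 2 * N < S.card → lam S = 0) ∧
    (∀ S : Finset V, 0 ≤ lam S) ∧
    (∀ i : ℕ, i ≤ 2 * N →
      ∑ S ∈ Finset.univ.filter (fun S : Finset V => S.card = i), lam S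
        = (N.choose i : ℝ)) ∧
    (momentMatrix N lam).PosSemidef}

open IncidenceAlgebra

section ExtremePoints

lemma mem_extremePoints_iff_forall_midpoint {𝕜 E : Type*} [Field 𝕜] [LinearOrder 𝕜]
    [IsStrictOrderedRing 𝕜] [Invertible (2 : 𝕜)] [AddCommGroup E] [Module 𝕜 E] {A : Set E}
    (hA : Convex 𝕜 A) {x : E} (hx : x ∈ A) :
    x ∈ A.extremePoints 𝕜 ↔ ∀ y ∈ A, ∀ z ∈ A, midpoint 𝕜 y z = x → y = z := by
  refine ⟨fun h y hy z hz hyz ↦ ?_, fun h ↦ mem_extremePoints_iff_left.2 ⟨hx, ?_⟩⟩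
  · obtain ⟨rfl, rfl⟩ := (mem_extremePoints.1 h).2 y hy z hz (hyz ▸ midpoint_mem_openSegment y z)
    rfl
  · rintro y hy z hz ⟨a, b, ha, hb, hab, rfl⟩
    -- `a • y + b • z` is the midpoint of two points of `A` that differ by `2 * c` times `y - z`.
    set c := min a b
    have hc : 0 < c := lt_min ha hb
    have hca : c ≤ a := min_le_left a b
    have hcb : c ≤ b := min_le_right a b
    have h_eq : (a + c) • y + (b - c) • z = (a - c) • y + (b + c) • z := by
      refine h _ (hA hy hz ?_ ?_ ?_) _ (hA hy hz ?_ ?_ ?_) ?_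
      iterate 6 linarith
      rw [midpoint_eq_smul_add, invOf_eq_inv]
      module
    have h_smul : (2 * c) • y = (2 * c) • z := by
      linear_combination (norm := module) h_eq
    have hyz : y = z := smul_right_injective E (mul_pos two_pos hc).ne' h_smul
    rw [hyz, ← add_smul, hab, one_smul]

lemma extremePoints_convexHull_of_subset_pi_zero_one {ι : Type*} {A : Set (ι → ℝ)}
    (hA : A ⊆ Set.univ.pi fun _ ↦ {0, 1}) : (convexHull ℝ A).extremePoints ℝ = A := by
  have hcube : Set.univ.pi (fun _ : ι ↦ ({0, 1} : Set ℝ)) =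
      (Set.univ.pi fun _ ↦ Set.Icc 0 1).extremePoints ℝ := by
    simp only [extremePoints_pi, Set.extremePoints_Icc zero_le_one]
  have hA' : A ⊆ (Set.univ.pi fun _ ↦ Set.Icc 0 1).extremePoints ℝ := hcube ▸ hA
  have hull_subset : convexHull ℝ A ⊆ Set.univ.pi fun _ ↦ Set.Icc 0 1 :=
    convexHull_min (hA'.trans extremePoints_subset) (convex_pi fun _ _ ↦ convex_Icc 0 1)
  exact extremePoints_convexHull_subset.antisymm fun x hx ↦
    inter_extremePoints_subset_extremePoints_of_subset hull_subset
      ⟨subset_convexHull ℝ A hx, hA' hx⟩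

end ExtremePoints

section Indicator

lemma indicator_one_eq_iff {α M : Type*} [Zero M] [One M] {s : Set α} {f : α → M} :
    s.indicator 1 = f ↔ (∀ x ∈ s, f x = 1) ∧ ∀ x ∉ s, f x = 0 := by
  classical
  refine ⟨?_, fun ⟨hs, hsc⟩ ↦ funext fun x ↦ ?_⟩
  · rintro rfl
    exact ⟨fun x hx ↦ Set.indicator_of_mem hx 1, fun x hx ↦ Set.indicator_of_notMem hx 1⟩
  · by_cases hx : x ∈ s <;> simp [hx, hs, hsc]

lemma indicator_Iic_sup {α R : Type*} [SemilatticeSup α] [MulZeroOneClass R] (u j k : α) :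
    (Set.Iic u).indicator (1 : α → R) (j ⊔ k) =
      (Set.Iic u).indicator 1 j * (Set.Iic u).indicator 1 k := by
  by_cases hj : j ≤ u <;> by_cases hk : k ≤ u <;> simp [hj, hk]

end Indicator

section Moebius

variable {α R : Type*} [Fintype α] [DecidableEq α] [CommRing R]

/-- The upper Möbius inverse of `f`, that is, the unique `w` with `f s = ∑ t ≥ s, w t`. The sum may
run over all `r` because `mu R t r = 0` unless `t ≤ r`. -/
def moebiusInverse [PartialOrder α] [LocallyFiniteOrder α] (f : α → R) (t : α) : R :=
  ∑ r, mu R t r * f r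

section PartialOrder

variable [PartialOrder α] [LocallyFiniteOrder α]

lemma sum_mu_mul_indicator_Iic (t u : α) :
    ∑ j, mu R t j * (Set.Iic u).indicator 1 j = if t = u then 1 else 0 := by
  rw [← sum_Icc_mu_right t u, ← sum_subset (subset_univ (Icc t u))]
  · refine sum_congr rfl fun j hj ↦ ?_
    rw [Set.indicator_of_mem (Set.mem_Iic.2 (mem_Icc.1 hj).2), Pi.one_apply, mul_one]
  · intro j _ hj
    by_cases htj : t ≤ j
    · rw [Set.indicator_of_notMem (s := Set.Iic u) fun hju ↦ hj (mem_Icc.2 ⟨htj, hju⟩), mul_zero]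
    · rw [apply_eq_zero_of_not_le htj, zero_mul]

lemma sum_indicator_Iic_mul_mu (s r : α) :
    ∑ t, (Set.Iic t).indicator 1 s * mu R t r = if s = r then 1 else 0 := by
  rw [← sum_Icc_mu_left s r, ← sum_subset (subset_univ (Icc s r))]
  · refine sum_congr rfl fun t ht ↦ ?_
    rw [Set.indicator_of_mem (Set.mem_Iic.2 (mem_Icc.1 ht).1), Pi.one_apply, one_mul]
  · intro t _ ht
    by_cases htr : t ≤ r
    · rw [Set.indicator_of_notMem (s := Set.Iic t) fun hst ↦ ht (mem_Icc.2 ⟨hst, htr⟩), zero_mul]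
    · rw [apply_eq_zero_of_not_le htr, mul_zero]

lemma sum_moebiusInverse_smul_indicator_Iic (f : α → R) :
    ∑ t, moebiusInverse f t • (Set.Iic t).indicator 1 = f := by
  ext s
  calc (∑ t, moebiusInverse f t • (Set.Iic t).indicator 1) s
      = ∑ r, (∑ t, (Set.Iic t).indicator 1 s * mu R t r) * f r := by
        simp only [Finset.sum_apply, Pi.smul_apply, smul_eq_mul, moebiusInverse, sum_mul]
        rw [sum_comm]
        exact sum_congr rfl fun _ _ ↦ sum_congr rfl fun _ _ ↦ by ring
    _ = f s := by simp [sum_indicator_Iic_mul_mu]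

lemma sum_moebiusInverse_eq_apply_bot [OrderBot α] (f : α → R) :
    ∑ t, moebiusInverse f t = f ⊥ := by
  simpa using congrFun (sum_moebiusInverse_smul_indicator_Iic f) ⊥

lemma moebiusInverse_eq_self {f : α → R} {t : α} (hf : ∀ r, t < r → f r = 0) :
    moebiusInverse f t = f t := by
  rw [moebiusInverse, Fintype.sum_eq_single t, mu_self, one_mul]
  intro r hrt
  by_cases htr : t ≤ r
  · rw [hf r (htr.lt_of_ne' hrt), mul_zero]
  · rw [apply_eq_zero_of_not_le htr, zero_mul]

end PartialOrder

lemma sum_sum_mu_mul_sup_mul_mu [SemilatticeSup α] [LocallyFiniteOrder α] (f : α → R) (t : α) :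
    ∑ j, ∑ k, mu R t j * f (j ⊔ k) * mu R t k = moebiusInverse f t := by
  calc ∑ j, ∑ k, mu R t j * f (j ⊔ k) * mu R t k
      = ∑ j, ∑ k, ∑ u, moebiusInverse f u *
          ((mu R t j * (Set.Iic u).indicator 1 j) * (mu R t k * (Set.Iic u).indicator 1 k)) := by
        refine sum_congr rfl fun j _ ↦ sum_congr rfl fun k _ ↦ ?_
        conv_lhs => rw [← sum_moebiusInverse_smul_indicator_Iic f]
        simp only [Finset.sum_apply, Pi.smul_apply, smul_eq_mul, mul_sum, sum_mul,
          indicator_Iic_sup]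
        exact sum_congr rfl fun _ _ ↦ by ring
    _ = ∑ u, moebiusInverse f u * (∑ j, mu R t j * (Set.Iic u).indicator 1 j) ^ 2 := by
        simp_rw [sq, sum_mul_sum, mul_sum]
        exact sum_comm_cycle
    _ = moebiusInverse f t := by simp [sum_mu_mul_indicator_Iic]

end Moebius

namespace FeasibleSet

variable {V : Type*} [Fintype V] [DecidableEq V] {N : ℕ} {lam : Finset V → ℝ}

lemma convex (N : ℕ) : Convex ℝ (FeasibleSet (V := V) N) := by
  rintro lam₁ ⟨hbig₁, hnn₁, hsum₁, hpsd₁⟩ lam₂ ⟨hbig₂, hnn₂, hsum₂, hpsd₂⟩ a b ha hb hab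
  refine ⟨fun S hS ↦ ?_, fun S ↦ ?_, fun i hi ↦ ?_, ?_⟩
  · simp [hbig₁ S hS, hbig₂ S hS]
  · exact add_nonneg (mul_nonneg ha (hnn₁ S)) (mul_nonneg hb (hnn₂ S))
  · simp only [Pi.add_apply, Pi.smul_apply, smul_eq_mul, sum_add_distrib, ← mul_sum, hsum₁ i hi,
      hsum₂ i hi]
    rw [← add_mul, hab, one_mul]
  · exact (hpsd₁.smul ha).add (hpsd₂.smul hb)

lemma indicator_Iic_mem {S : Finset V} (hS : #S = N) :
    (Set.Iic S).indicator 1 ∈ FeasibleSet N := by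
  refine ⟨fun T hT ↦ ?_, fun T ↦ Set.indicator_nonneg (fun _ _ ↦ zero_le_one) T, fun i _ ↦ ?_, ?_⟩
  · refine Set.indicator_of_notMem (fun hTS : T ⊆ S ↦ ?_) 1
    have := card_le_card hTS
    omega
  · have hfilter : ({T : Finset V | #T = i} : Finset (Finset V)).filter (· ⊆ S) =
        powersetCard i S := by
      ext T
      simp [mem_powersetCard, and_comm]
    simp [Set.indicator_apply, ← hfilter, ← hS, ← card_powersetCard]
  · have hrank_one : momentMatrix N ((Set.Iic S).indicator 1) =
        Matrix.vecMulVec (fun J ↦ (Set.Iic S).indicator 1 J.1)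
          (star fun J ↦ (Set.Iic S).indicator 1 J.1) := by
      ext J J'
      exact indicator_Iic_sup S J.1 J'.1
    rw [hrank_one]
    exact Matrix.posSemidef_vecMulVec_self_star _

lemma eq_zero_of_lt_card (hlam : lam ∈ FeasibleSet N) {S : Finset V} (hS : N < #S) :
    lam S = 0 := by
  obtain ⟨hbig, hnn, hsum, -⟩ := hlam
  rcases lt_or_ge (2 * N) #S with h | h
  · exact hbig S h
  · have hlevel := hsum #S h
    rw [Nat.choose_eq_zero_of_lt hS, Nat.cast_zero, sum_eq_zero_iff_of_nonneg fun T _ ↦ hnn T]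
      at hlevel
    exact hlevel S (by simp)

lemma sum_sum_mul_union_mul_nonneg (hlam : lam ∈ FeasibleSet N) (x : Finset V → ℝ) :
    0 ≤ ∑ J, ∑ J', x J * lam (J ∪ J') * x J' := by
  have hvanish {J J' : Finset V} (h : N < #J ∨ N < #J') : x J * lam (J ∪ J') * x J' = 0 := by
    have : N < #(J ∪ J') := h.elim (·.trans_le (card_le_card subset_union_left))
      (·.trans_le (card_le_card subset_union_right))
    simp [eq_zero_of_lt_card hlam this]
  have hrestrict (g : Finset V → ℝ) (hg : ∀ J, N < #J → g J = 0) :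
      ∑ J : {J : Finset V // #J ≤ N}, g J = ∑ J, g J :=
    Fintype.sum_of_injective _ Subtype.val_injective _ _
      (fun J hJ ↦ hg J (by simpa using hJ)) fun _ ↦ rfl
  obtain ⟨-, -, -, hpsd⟩ := hlam
  have hquad := hpsd.dotProduct_mulVec_nonneg fun J ↦ x J.1
  simp only [dotProduct, Matrix.mulVec, momentMatrix, star_trivial, mul_sum, ← mul_assoc] at hquad
  rw [← hrestrict _ fun J hJ ↦ sum_eq_zero fun J' _ ↦ hvanish (.inl hJ)]
  exact hquad.trans_eq (sum_congr rfl fun J _ ↦ hrestrict _ fun J' hJ' ↦ hvanish (.inr hJ'))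

lemma moebiusInverse_nonneg (hlam : lam ∈ FeasibleSet N) (T : Finset V) :
    0 ≤ moebiusInverse lam T :=
  sum_sum_mu_mul_sup_mul_mu lam T ▸ sum_sum_mul_union_mul_nonneg hlam (mu ℝ T)

lemma sum_moebiusInverse (hlam : lam ∈ FeasibleSet N) : ∑ T, moebiusInverse lam T = 1 := by
  obtain ⟨-, -, hsum, -⟩ := hlam
  rw [sum_moebiusInverse_eq_apply_bot, bot_eq_empty]
  simpa [filter_eq'] using hsum 0 (Nat.zero_le _)

lemma moebiusInverse_eq_self_of_le_card (hlam : lam ∈ FeasibleSet N) {T : Finset V}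
    (hT : N ≤ #T) : moebiusInverse lam T = lam T :=
  moebiusInverse_eq_self fun _ hTR ↦ eq_zero_of_lt_card hlam (hT.trans_lt (card_lt_card hTR))

lemma sum_card_eq_moebiusInverse (hlam : lam ∈ FeasibleSet N) :
    ∑ T with #T = N, moebiusInverse lam T = 1 := by
  have hweight : ∀ T ∈ ({T | #T = N} : Finset (Finset V)), moebiusInverse lam T = lam T :=
    fun T hT ↦ moebiusInverse_eq_self_of_le_card hlam (mem_filter.1 hT).2.ge
  obtain ⟨-, -, hsum, -⟩ := hlam
  rw [sum_congr rfl hweight, hsum N (by omega), Nat.choose_self, Nat.cast_one]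

lemma moebiusInverse_eq_zero (hlam : lam ∈ FeasibleSet N) {T : Finset V} (hT : #T ≠ N) :
    moebiusInverse lam T = 0 := by
  have hrest : ∑ T with #T ≠ N, moebiusInverse lam T = 0 := by
    have := sum_filter_add_sum_filter_not univ (fun T : Finset V ↦ #T = N) (moebiusInverse lam)
    linarith [sum_moebiusInverse hlam, sum_card_eq_moebiusInverse hlam]
  rw [sum_eq_zero_iff_of_nonneg fun T _ ↦ moebiusInverse_nonneg hlam T] at hrest
  exact hrest T (by simpa using hT)

lemma eq_convexHull (N : ℕ) :
    FeasibleSet N = convexHull ℝ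
      ((fun S : Finset V ↦ (Set.Iic S).indicator (1 : Finset V → ℝ)) '' {S | #S = N}) := by
  refine Set.Subset.antisymm (fun lam hlam ↦ ?_) (convexHull_min ?_ (convex N))
  · have hlevel : ∑ S with #S = N, moebiusInverse lam S • (Set.Iic S).indicator 1 = lam := by
      rw [sum_filter_of_ne, sum_moebiusInverse_smul_indicator_Iic]
      intro S _ hS
      by_contra hcard
      exact hS (by rw [moebiusInverse_eq_zero hlam hcard, zero_smul])
    rw [← hlevel]
    exact (convex_convexHull ℝ _).sum_mem (fun S _ ↦ moebiusInverse_nonneg hlam S)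
      (sum_card_eq_moebiusInverse hlam)
      fun S hS ↦ subset_convexHull ℝ _ ⟨S, (mem_filter.1 hS).2, rfl⟩
  · rintro _ ⟨S, hS, rfl⟩
    exact indicator_Iic_mem hS

lemma extremePoints_eq (N : ℕ) :
    (FeasibleSet N).extremePoints ℝ =
      (fun S : Finset V ↦ (Set.Iic S).indicator (1 : Finset V → ℝ)) '' {S | #S = N} := by
  rw [eq_convexHull]
  refine extremePoints_convexHull_of_subset_pi_zero_one ?_
  rintro _ ⟨S, -, rfl⟩ R -
  exact Set.indicator_eq_zero_or_self (Set.Iic S) 1 R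

end FeasibleSet

/-- `lam ∈ F` is an extreme point of `F` if and only if there is an
`S₀ ⊆ V` with `|S₀| = N` such that `lam R = 1` for `R ⊆ S₀` and `lam R = 0`
for `R ⊄ S₀`. -/
theorem stmt_3 {V : Type*} [Fintype V] [DecidableEq V] (N : ℕ)
    (hN1 : 1 ≤ N) (hN2 : N ≤ Fintype.card V)
    (lam : Finset V → ℝ) (hlam : lam ∈ FeasibleSet (V := V) N) :
    (∀ lam₁ ∈ FeasibleSet (V := V) N, ∀ lam₂ ∈ FeasibleSet (V := V) N,
        (∀ R : Finset V, lam R = (lam₁ R + lam₂ R) / 2) → lam₁ = lam₂) ↔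
    ∃ S₀ : Finset V, S₀.card = N ∧
      (∀ R : Finset V, R ⊆ S₀ → lam R = 1) ∧
      (∀ R : Finset V, ¬ R ⊆ S₀ → lam R = 0) := by
  have havg (lam₁ lam₂ : Finset V → ℝ) :
      midpoint ℝ lam₁ lam₂ = lam ↔ ∀ R, lam R = (lam₁ R + lam₂ R) / 2 := by
    simp [funext_iff, midpoint_eq_smul_add, div_eq_inv_mul, mul_add, eq_comm]
  have hextreme := mem_extremePoints_iff_forall_midpoint (FeasibleSet.convex N) hlam
  simp only [havg] at hextreme
  rw [← hextreme, FeasibleSet.extremePoints_eq]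
  exact exists_congr fun S₀ ↦ and_congr_right fun _ ↦ indicator_one_eq_iff
end

section
/- Let Γ be a finite group acting linearly on ℝⁿ through a group homomorphism ρ : Γ → GLₙ(ℝ), inducing the action (γ·p)(x) = p(ρ(γ)⁻¹ x) on real polynomials p in n variables. Let g₁,…,g_m ∈ ℝ[x₁,…,xₙ], set g₀ = 1, fix δ ∈ ℕ, and set hᵢ = ⌊(δ − deg gᵢ)/2⌋ for i = 0,…,m. Assume the set {g₁,…,g_m} is Γ-invariant, i.e., for every γ ∈ Γ there is a permutation σ of {1,…,m} with γ·gᵢ = g_{σ(i)} for all i. Let p ∈ ℝ[x₁,…,xₙ] be Γ-invariant (γ·p = p for all γ ∈ Γ) and suppose p = Σ_{i=0}^{m} gᵢ sᵢ for some sum-of-squares polynomials sᵢ of degree at most 2hᵢ. Then there exist sum-of-squares polynomials s̄₀,…,s̄_m with deg s̄ᵢ ≤ 2hᵢ such that p = Σ_{i=0}^{m} gᵢ s̄ᵢ and each s̄ᵢ is invariant under the stabilizer Γᵢ = {γ ∈ Γ : γ·gᵢ = gᵢ} (γ·s̄ᵢ = s̄ᵢ for all γ ∈ Γᵢ). -/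
/-!
Group equal multipliers together: `p = ∑ a, a * F a`, where `a` runs over the set of values of
`g` and `F a` is the sum of the `s i` with `g i = a`. Averaging `F` over the conjugation action
`(γ • F) a = γ • F (γ⁻¹ • a)` preserves this identity, because the set of values and `p` are
`Γ`-invariant, and it makes `F` equivariant, so that every element fixing `a` also fixes `F a`.
Finally `F a` is shared out equally among the indices `i` with `g i = a`. The constraint on a weight
attached to `a`, being a sum of squares of degree at most `2⌊(δ - deg a)/2⌋`, cuts out a convex cone
that depends equivariantly on `a`, so it survives both steps. The weight `s₀` is the one attached
to `g₀ = 1`, whose stabilizer is all of `Γ`.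
-/

/-- The action of `γ ∈ Γ` on polynomials induced by a linear action `ρ : Γ → GLₙ(ℝ)`
on `ℝⁿ`: `(γ · p)(x) = p (ρ(γ)⁻¹ x)`. -/
noncomputable def polyAct {Γ : Type*} [Group Γ] {n : ℕ}
    (ρ : Γ →* Matrix.GeneralLinearGroup (Fin n) ℝ) (γ : Γ)
    (p : MvPolynomial (Fin n) ℝ) : MvPolynomial (Fin n) ℝ :=
  MvPolynomial.aeval (fun i : Fin n =>
    ∑ j : Fin n, MvPolynomial.C
      ((((ρ γ)⁻¹ : Matrix.GeneralLinearGroup (Fin n) ℝ) : Matrix (Fin n) (Fin n) ℝ) i j)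
      * MvPolynomial.X j) p

/-- A polynomial is a sum of squares. -/
def IsSOS {n : ℕ} (s : MvPolynomial (Fin n) ℝ) : Prop :=
  ∃ (k : ℕ) (q : Fin k → MvPolynomial (Fin n) ℝ), s = ∑ i, (q i) ^ 2


open MvPolynomial Finset
open scoped BigOperators

section EquivariantAverage

variable {Γ X V : Type*} [Group Γ] [Fintype Γ] [MulAction Γ X]
  [AddCommMonoid V] [Module ℚ≥0 V] [DistribMulAction Γ V]

variable (Γ) in
/-- The average of `F : X → V` over its translates under the conjugation action
`(γ • F) x = γ • F (γ⁻¹ • x)` of the finite group `Γ`; it makes an arbitrary map equivariant. -/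
noncomputable def equivariantAverage (F : X → V) (x : X) : V :=
  𝔼 γ : Γ, γ • F (γ⁻¹ • x)

lemma smul_equivariantAverage (γ : Γ) (F : X → V) (x : X) :
    γ • equivariantAverage Γ F x = equivariantAverage Γ F (γ • x) := by
  rw [equivariantAverage, smul_expect]
  refine Fintype.expect_equiv (Equiv.mulLeft γ) _ _ fun η ↦ ?_
  simp only [Equiv.coe_mulLeft, mul_inv_rev, mul_smul, inv_smul_smul]

lemma equivariantAverage_mem {M : X → Submodule ℚ≥0 V}
    (hM : ∀ (γ : Γ) (x : X), ∀ v ∈ M x, γ • v ∈ M (γ • x)) {F : X → V}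
    (hF : ∀ x, F x ∈ M x) (x : X) : equivariantAverage Γ F x ∈ M x := by
  refine (M x).smul_mem _ (sum_mem fun γ _ ↦ ?_)
  simpa only [smul_inv_smul] using hM γ _ _ (hF (γ⁻¹ • x))

lemma sum_mul_equivariantAverage {A : Type*} [Semiring A] [Module ℚ≥0 A]
    [MulSemiringAction Γ A] {G : Finset A} (hG : ∀ γ : Γ, ∀ a ∈ G, γ • a ∈ G) (F : A → A) :
    ∑ a ∈ G, a * equivariantAverage Γ F a = 𝔼 γ : Γ, γ • ∑ a ∈ G, a * F a := by
  simp only [equivariantAverage, mul_expect, ← expect_sum_comm]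
  refine expect_congr rfl fun γ _ ↦ ?_
  rw [smul_sum]
  refine sum_nbij' (γ⁻¹ • ·) (γ • ·) (hG γ⁻¹) (hG γ) (fun a _ ↦ smul_inv_smul γ a)
    (fun a _ ↦ inv_smul_smul γ a) fun a _ ↦ ?_
  rw [smul_mul', smul_inv_smul]

end EquivariantAverage

section InvariantWeights

variable {ι A : Type*} [Fintype ι] [Semiring A]

lemma sum_image_mul_sum_fiber [DecidableEq A] (g s : ι → A) :
    ∑ a ∈ univ.image g, a * ∑ i with g i = a, s i = ∑ i, g i * s i := by
  rw [← sum_fiberwise_of_maps_to fun i _ ↦ mem_image_of_mem g (mem_univ i)]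
  refine sum_congr rfl fun a _ ↦ ?_
  rw [mul_sum]
  exact sum_congr rfl fun i hi ↦ by rw [(mem_filter.1 hi).2]

lemma sum_mul_inv_card_fiber_smul [DecidableEq A] [Module ℚ≥0 A] (g : ι → A) (F : A → A) :
    ∑ i, g i * ((#{j | g j = g i} : ℚ≥0)⁻¹ • F (g i)) = ∑ a ∈ univ.image g, a * F a := by
  rw [sum_comp (fun a ↦ a * ((#{j | g j = a} : ℚ≥0)⁻¹ • F a)) g]
  refine sum_congr rfl fun a ha ↦ ?_
  have hcard : (#{j | g j = a} : ℚ≥0) ≠ 0 := by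
    obtain ⟨i, -, hi⟩ := mem_image.1 ha
    exact Nat.cast_ne_zero.2 (card_ne_zero_of_mem (mem_filter.2 ⟨mem_univ i, hi⟩))
  rw [mul_smul_comm, ← Nat.cast_smul_eq_nsmul ℚ≥0, smul_inv_smul₀ hcard]

theorem exists_stabilizer_invariant_weights {Γ : Type*} [Group Γ] [Finite Γ] [Module ℚ≥0 A]
    [MulSemiringAction Γ A] {M : A → Submodule ℚ≥0 A}
    (hM : ∀ (γ : Γ) (a : A), ∀ x ∈ M a, γ • x ∈ M (γ • a)) {g s : ι → A}
    (hg : ∀ (γ : Γ) (i : ι), γ • g i ∈ Set.range g) (hs : ∀ i, s i ∈ M (g i))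
    (hinv : ∀ γ : Γ, γ • ∑ i, g i * s i = ∑ i, g i * s i) :
    ∃ t : ι → A, (∀ i, t i ∈ M (g i)) ∧ ∑ i, g i * t i = ∑ i, g i * s i ∧
      ∀ (γ : Γ) (i : ι), γ • g i = g i → γ • t i = t i := by
  classical
  have := Fintype.ofFinite Γ
  let F (a : A) : A := ∑ i with g i = a, s i
  have hF (a : A) : F a ∈ M a := sum_mem fun i hi ↦ (mem_filter.1 hi).2 ▸ hs i
  have himage (γ : Γ) (a : A) (ha : a ∈ univ.image g) : γ • a ∈ univ.image g := by
    obtain ⟨i, -, rfl⟩ := mem_image.1 ha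
    simpa using hg γ i
  refine ⟨fun i ↦ (#{j | g j = g i} : ℚ≥0)⁻¹ • equivariantAverage Γ F (g i),
    fun i ↦ (M _).smul_mem _ (equivariantAverage_mem hM hF _), ?_, fun γ i hγ ↦ ?_⟩
  · calc ∑ i, g i * ((#{j | g j = g i} : ℚ≥0)⁻¹ • equivariantAverage Γ F (g i))
        = ∑ a ∈ univ.image g, a * equivariantAverage Γ F a := sum_mul_inv_card_fiber_smul g _
      _ = 𝔼 γ : Γ, γ • ∑ a ∈ univ.image g, a * F a := sum_mul_equivariantAverage himage F
      _ = ∑ i, g i * s i := by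
        simp only [F, sum_image_mul_sum_fiber, hinv, Fintype.expect_const]
  · rw [smul_comm, smul_equivariantAverage, hγ]

end InvariantWeights

section SumOfSquares

lemma isSumSq_map {R S : Type*} [NonAssocSemiring R] [NonAssocSemiring S] (f : R →+* S) {s : R}
    (hs : IsSumSq s) : IsSumSq (f s) := by
  induction hs with
  | zero => simp
  | sq_add a _ ih => simpa only [map_add, map_mul] using (IsSumSq.mul_self (f a)).add ih

lemma isSumSq_nnrat (q : ℚ≥0) : IsSumSq q := by
  have hden : (q.den : ℚ≥0) ≠ 0 := Nat.cast_ne_zero.2 q.den_ne_zero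
  have hq : q = ((q.num * q.den : ℕ) : ℚ≥0) * ((q.den : ℚ≥0)⁻¹ * (q.den : ℚ≥0)⁻¹) := by
    rw [Nat.cast_mul, mul_assoc, mul_inv_cancel_left₀ hden, ← div_eq_mul_inv, q.num_div_den]
  exact hq ▸ (IsSumSq.natCast _).mul (.mul_self _)

lemma isSumSq_nnrat_smul {R : Type*} [CommSemiring R] [Algebra ℚ≥0 R] (q : ℚ≥0) {s : R}
    (hs : IsSumSq s) : IsSumSq (q • s) := by
  rw [Algebra.smul_def]
  exact (isSumSq_map (algebraMap ℚ≥0 R) (isSumSq_nnrat q)).mul hs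

lemma isSOS_iff_isSumSq {n : ℕ} {s : MvPolynomial (Fin n) ℝ} : IsSOS s ↔ IsSumSq s := by
  constructor
  · rintro ⟨k, q, rfl⟩
    exact IsSumSq.sum_sq univ q
  · intro hs
    induction hs with
    | zero => exact ⟨0, Fin.elim0, by simp⟩
    | sq_add a _ ih =>
      obtain ⟨k, q, rfl⟩ := ih
      exact ⟨k + 1, Fin.cons a q, by simp [Fin.sum_univ_succ, sq]⟩

/-- The convex cone of sums of squares of total degree at most `d`. Scaling by nonnegative
rationals is enough for averaging, and keeps the coefficients in an arbitrary `ℚ≥0`-algebra. -/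
noncomputable def sumSqDegreeLE (σ R : Type*) [CommSemiring R] [Algebra ℚ≥0 R] (d : ℕ) :
    Submodule ℚ≥0 (MvPolynomial σ R) where
  carrier := {s | IsSumSq s ∧ s.totalDegree ≤ d}
  zero_mem' := ⟨.zero, by simp⟩
  add_mem' hs ht := ⟨hs.1.add ht.1, (totalDegree_add _ _).trans (max_le hs.2 ht.2)⟩
  smul_mem' q _ hs := ⟨isSumSq_nnrat_smul q hs.1, (totalDegree_smul_le _ _).trans hs.2⟩

end SumOfSquares

lemma totalDegree_bind₁_le {σ τ R : Type*} [CommSemiring R] {f : σ → MvPolynomial τ R} {k : ℕ}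
    (hf : ∀ i, (f i).totalDegree ≤ k) (p : MvPolynomial σ R) :
    (bind₁ f p).totalDegree ≤ p.totalDegree * k := by
  have hmonomial (d : σ →₀ ℕ) :
      (∏ i ∈ d.support, f i ^ d i).totalDegree ≤ (d.sum fun _ e ↦ e) * k :=
    calc (∏ i ∈ d.support, f i ^ d i).totalDegree
        ≤ ∑ i ∈ d.support, (f i ^ d i).totalDegree := totalDegree_finsetProd _ _
      _ ≤ ∑ i ∈ d.support, d i * k := sum_le_sum fun i _ ↦
          (totalDegree_pow _ _).trans (Nat.mul_le_mul_left _ (hf i))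
      _ = (d.sum fun _ e ↦ e) * k := (sum_mul _ _ _).symm
  rw [bind₁, aeval_def, eval₂_eq]
  refine totalDegree_finsetSum_le fun d hd ↦ ?_
  rw [algebraMap_eq, C_mul']
  exact (totalDegree_smul_le _ _).trans
    ((hmonomial d).trans (Nat.mul_le_mul_right k (le_totalDegree hd)))

section LinearAction

variable {Γ σ R : Type*} [Group Γ] [Fintype σ] [DecidableEq σ] [CommRing R]

/-- The action of `Γ` on polynomials induced by a linear representation `ρ` on the space of
variables: `γ` substitutes the linear forms given by the rows of `(ρ γ)⁻¹`. -/
noncomputable abbrev linearSubstAction (ρ : Γ →* Matrix.GeneralLinearGroup σ R) :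
    MulSemiringAction Γ (MvPolynomial σ R) where
  smul γ := bind₁ ((ρ γ)⁻¹).val.toMvPolynomial
  one_smul p := by
    change bind₁ ((ρ 1)⁻¹).val.toMvPolynomial p = p
    simp
  mul_smul γ η p := by
    change bind₁ ((ρ (γ * η))⁻¹).val.toMvPolynomial p =
      bind₁ ((ρ γ)⁻¹).val.toMvPolynomial (bind₁ ((ρ η)⁻¹).val.toMvPolynomial p)
    rw [map_mul, mul_inv_rev, Units.val_mul, bind₁_bind₁]
    simp only [← Matrix.toMvPolynomial_mul]
  smul_zero γ := map_zero _
  smul_add γ := map_add _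
  smul_one γ := map_one _
  smul_mul γ := map_mul _

lemma totalDegree_linearSubstAction_smul_le (ρ : Γ →* Matrix.GeneralLinearGroup σ R) (γ : Γ)
    (p : MvPolynomial σ R) :
    letI := linearSubstAction ρ
    (γ • p).totalDegree ≤ p.totalDegree :=
  (totalDegree_bind₁_le (Matrix.toMvPolynomial_totalDegree_le _) p).trans_eq (mul_one _)

lemma polyAct_eq_smul {n : ℕ} (ρ : Γ →* Matrix.GeneralLinearGroup (Fin n) ℝ) (γ : Γ)
    (p : MvPolynomial (Fin n) ℝ) :
    letI := linearSubstAction ρ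
    polyAct ρ γ p = γ • p := by
  change polyAct ρ γ p = bind₁ ((ρ γ)⁻¹).val.toMvPolynomial p
  simp only [polyAct, bind₁, C_mul_X_eq_monomial]
  rfl

end LinearAction

theorem stmt_16_general {Γ σ ι R : Type*} [Group Γ] [Finite Γ] [Fintype ι] [CommSemiring R]
    [Algebra ℚ≥0 R] [MulSemiringAction Γ (MvPolynomial σ R)]
    (hdeg : ∀ (γ : Γ) (q : MvPolynomial σ R), (γ • q).totalDegree ≤ q.totalDegree)
    (g : ι → MvPolynomial σ R) (δ : ℕ) (hg : ∀ (γ : Γ) (i : ι), γ • g i ∈ Set.range g)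
    (p : MvPolynomial σ R) (hp : ∀ γ : Γ, γ • p = p)
    (s₀ : MvPolynomial σ R) (s : ι → MvPolynomial σ R)
    (hs₀ : IsSumSq s₀) (hs : ∀ i, IsSumSq (s i)) (hs₀deg : s₀.totalDegree ≤ 2 * (δ / 2))
    (hsdeg : ∀ i, (s i).totalDegree ≤ 2 * ((δ - (g i).totalDegree) / 2))
    (hrep : p = s₀ + ∑ i, g i * s i) :
    ∃ (t₀ : MvPolynomial σ R) (t : ι → MvPolynomial σ R),
      IsSumSq t₀ ∧ (∀ i, IsSumSq (t i)) ∧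
      t₀.totalDegree ≤ 2 * (δ / 2) ∧
      (∀ i, (t i).totalDegree ≤ 2 * ((δ - (g i).totalDegree) / 2)) ∧
      p = t₀ + ∑ i, g i * t i ∧
      (∀ γ : Γ, γ • t₀ = t₀) ∧
      (∀ i, ∀ γ : Γ, γ • g i = g i → γ • t i = t i) := by
  let M (a : MvPolynomial σ R) := sumSqDegreeLE σ R (2 * ((δ - a.totalDegree) / 2))
  have hM (γ : Γ) (a x : MvPolynomial σ R) (hx : x ∈ M a) : γ • x ∈ M (γ • a) :=
    ⟨isSumSq_map (MulSemiringAction.toRingHom Γ _ γ) hx.1, (hdeg γ x).trans <| hx.2.trans <| by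
      have := hdeg γ a
      gcongr⟩
  let g' (i : Option ι) : MvPolynomial σ R := i.elim 1 g
  let s' (i : Option ι) : MvPolynomial σ R := i.elim s₀ s
  have hrep' : ∑ i, g' i * s' i = p := by simp [g', s', Fintype.sum_option, hrep]
  have hg' (γ : Γ) : ∀ i, γ • g' i ∈ Set.range g'
    | none => ⟨none, (smul_one γ).symm⟩
    | some i => let ⟨j, hj⟩ := hg γ i; ⟨some j, hj⟩
  have hs' : ∀ i, s' i ∈ M (g' i)
    | none => ⟨hs₀, by simpa [g', s'] using hs₀deg⟩
    | some i => ⟨hs i, hsdeg i⟩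
  obtain ⟨t, ht, hsum, hstab⟩ :=
    exists_stabilizer_invariant_weights hM hg' hs' (by simpa only [hrep'] using hp)
  refine ⟨t none, fun i ↦ t (some i), (ht none).1, fun i ↦ (ht (some i)).1,
    by simpa [g'] using (ht none).2, fun i ↦ (ht (some i)).2, ?_,
    fun γ ↦ hstab γ none (smul_one γ), fun i γ ↦ hstab γ (some i)⟩
  rw [← hrep', ← hsum]
  simp [g', Fintype.sum_option]

/-- Symmetrized Putinar representation. If a `Γ`-invariant polynomial `p`
has a degree-truncated quadratic module representation `p = s₀ + ∑ᵢ gᵢ sᵢ` with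
sum-of-squares weights `sᵢ` of degree at most `2hᵢ` (where `h₀ = ⌊δ/2⌋` and
`hᵢ = ⌊(δ - deg gᵢ)/2⌋`), and the set `{g₁, …, g_m}` is `Γ`-invariant, then there is
such a representation in which `s₀` is `Γ`-invariant and each `sᵢ` is invariant under
the stabilizer of `gᵢ`. -/
theorem stmt_16 {Γ : Type*} [Group Γ] [Fintype Γ] {n m : ℕ}
    (ρ : Γ →* Matrix.GeneralLinearGroup (Fin n) ℝ)
    (g : Fin m → MvPolynomial (Fin n) ℝ) (δ : ℕ)
    (hgset : ∀ γ : Γ, ∃ σ : Equiv.Perm (Fin m), ∀ i, polyAct ρ γ (g i) = g (σ i))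
    (p : MvPolynomial (Fin n) ℝ) (hpinv : ∀ γ : Γ, polyAct ρ γ p = p)
    (s₀ : MvPolynomial (Fin n) ℝ) (s : Fin m → MvPolynomial (Fin n) ℝ)
    (hs₀sos : IsSOS s₀) (hssos : ∀ i, IsSOS (s i))
    (hs₀deg : s₀.totalDegree ≤ 2 * (δ / 2))
    (hsdeg : ∀ i, (s i).totalDegree ≤ 2 * ((δ - (g i).totalDegree) / 2))
    (hrep : p = s₀ + ∑ i, g i * s i) :
    ∃ (t₀ : MvPolynomial (Fin n) ℝ) (t : Fin m → MvPolynomial (Fin n) ℝ),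
      IsSOS t₀ ∧ (∀ i, IsSOS (t i)) ∧
      t₀.totalDegree ≤ 2 * (δ / 2) ∧
      (∀ i, (t i).totalDegree ≤ 2 * ((δ - (g i).totalDegree) / 2)) ∧
      p = t₀ + ∑ i, g i * t i ∧
      (∀ γ : Γ, polyAct ρ γ t₀ = t₀) ∧
      (∀ i, ∀ γ : Γ, polyAct ρ γ (g i) = g i → polyAct ρ γ (t i) = t i) := by
  let := linearSubstAction ρ
  simp only [polyAct_eq_smul ρ, isSOS_iff_isSumSq] at hgset hpinv hs₀sos hssos ⊢
  exact stmt_16_general (totalDegree_linearSubstAction_smul_le ρ) g δ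
    (fun γ i ↦ let ⟨σ, hσ⟩ := hgset γ; ⟨σ i, (hσ i).symm⟩)
    p hpinv s₀ s hs₀sos hssos hs₀deg hsdeg hrep
end
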